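/- Let A be the adjacency matrix of a finite simple graph G (a symmetric integer matrix), with spectral decomposition A = Σ_{r=0}^d θ_r E_r. Then every entry of the average mixing matrix M̂ = Σ_{r=0}^d E_r ∘ E_r is a rational number; that is, for all vertices a, b, Σ_{r=0}^d ((E_r)_{ab})² ∈ ℚ. -/

import Mathlib

open Matrix

/-!
Pinching `x ↦ ∑ i, e i * x * e i` by the spectral idempotents of `a` fixes everything that commutes
with `a` and kills every commutator `⁅a, y⁆`. Suppose `a` comes from an element `b` of a
finite-dimensional `K`-algebra. Then the kernel and the range of `ad b` meet trivially, so by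
dimension count they span the algebra over `K`, and on this sum pinching is the projection onto the
kernel; in particular it preserves `K`-rationality. For symmetric idempotents, the `(u, v)` entry of
the average mixing matrix is the `(u, u)` entry of the pinching of the matrix unit `single v v 1`.
-/

section Pinching

variable {ι R : Type*} [Fintype ι]

/-- The pinching `x ↦ ∑ i, e i * x * e i` of a semiring by a family `e`, which keeps the diagonal
blocks of `x` when `e` is a complete family of orthogonal idempotents. It is bundled as an additive
homomorphism, so that no ring of scalars has to be named. -/
def pinching [NonUnitalSemiring R] (e : ι → R) : R →+ R :=
  ∑ i, (AddMonoidHom.mulRight (e i)).comp (AddMonoidHom.mulLeft (e i))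

theorem pinching_apply [NonUnitalSemiring R] (e : ι → R) (x : R) :
    pinching e x = ∑ i, e i * x * e i := by
  simp [pinching]

theorem pinching_eq_self [Semiring R] {e : ι → R} (he : CompleteOrthogonalIdempotents e) {x : R}
    (hx : ∀ i j, i ≠ j → e i * x * e j = 0) : pinching e x = x :=
  calc
    pinching e x = ∑ i, ∑ j, e i * x * e j := by
      rw [pinching_apply]
      refine Finset.sum_congr rfl fun i _ ↦ ?_
      rw [Fintype.sum_eq_single i fun j hj ↦ hx i j hj.symm]
    _ = x := by simp only [← Finset.mul_sum, ← Finset.sum_mul, he.complete, mul_one, one_mul]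

end Pinching

theorem map_ring_lie {R S : Type*} [NonAssocRing R] [NonAssocRing S] (f : R →+* S) (x y : R) :
    f ⁅x, y⁆ = ⁅f x, f y⁆ := by
  simp only [Ring.lie_def, map_sub, map_mul]

section SpectralDecomposition

variable {ι L R : Type*} [Fintype ι] [CommRing L] [Ring R] [Algebra L R] {e : ι → R} {θ : ι → L}

theorem sum_smul_mul_idempotent (he : OrthogonalIdempotents e) (i : ι) :
    (∑ j, θ j • e j) * e i = θ i • e i := by
  classical simp [Finset.sum_mul, he.mul_eq]

theorem idempotent_mul_sum_smul (he : OrthogonalIdempotents e) (i : ι) :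
    e i * ∑ j, θ j • e j = θ i • e i := by
  classical simp [Finset.mul_sum, he.mul_eq]

theorem idempotent_mul_lie_mul_idempotent (he : OrthogonalIdempotents e) (x : R) (i j : ι) :
    e i * ⁅∑ k, θ k • e k, x⁆ * e j = (θ i - θ j) • (e i * x * e j) := by
  rw [Ring.lie_def, mul_sub, sub_mul, ← mul_assoc, idempotent_mul_sum_smul he,
    ← mul_assoc (e i) x, mul_assoc (e i * x), sum_smul_mul_idempotent he,
    smul_mul_assoc, smul_mul_assoc, mul_smul_comm, sub_smul]

theorem pinching_lie_eq_zero (he : OrthogonalIdempotents e) (x : R) :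
    pinching e ⁅∑ i, θ i • e i, x⁆ = 0 := by
  simp [pinching_apply, idempotent_mul_lie_mul_idempotent he]

variable [IsDomain L] [Module.IsTorsionFree L R]

theorem pinching_eq_self_of_commute (he : CompleteOrthogonalIdempotents e)
    (hθ : Function.Injective θ) {x : R} (hx : Commute (∑ i, θ i • e i) x) : pinching e x = x := by
  refine pinching_eq_self he fun i j hij ↦ ?_
  have h : (θ i - θ j) • (e i * x * e j) = 0 := by
    rw [← idempotent_mul_lie_mul_idempotent he.toOrthogonalIdempotents, hx.lie_eq,
      mul_zero, zero_mul]
  exact (smul_eq_zero.mp h).resolve_left (sub_ne_zero.mpr (hθ.ne hij))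

attribute [local instance] LieRing.ofAssociativeRing

variable {K S : Type*} [Field K] [Ring S] [Algebra K S] {f : S →+* R} {b : S}

theorem isCompl_ker_ad_range_ad [FiniteDimensional K S] (hf : Function.Injective f)
    (he : CompleteOrthogonalIdempotents e) (hθ : Function.Injective θ)
    (hb : f b = ∑ i, θ i • e i) :
    IsCompl (LinearMap.ker (LieAlgebra.ad K S b : Module.End K S))
      (LinearMap.range (LieAlgebra.ad K S b : Module.End K S)) := by
  refine (Submodule.isCompl_iff_disjoint _ _ ?_).mpr (Submodule.disjoint_def.mpr ?_)
  · rw [add_comm, LinearMap.finrank_range_add_finrank_ker]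
  rintro _ hker ⟨y, rfl⟩
  rw [LinearMap.mem_ker, LieAlgebra.ad_apply, LieAlgebra.ad_apply, ← commute_iff_lie_eq] at hker
  rw [LieAlgebra.ad_apply]
  have hfix : pinching e (f ⁅b, y⁆) = f ⁅b, y⁆ :=
    pinching_eq_self_of_commute he hθ (hb ▸ hker.map f)
  have hkill : pinching e (f ⁅b, y⁆) = 0 := by
    rw [map_ring_lie, hb, pinching_lie_eq_zero he.toOrthogonalIdempotents]
  exact (map_eq_zero_iff f hf).mp (hfix.symm.trans hkill)

variable (K) in
theorem pinching_map_mem_range [FiniteDimensional K S] (hf : Function.Injective f)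
    (he : CompleteOrthogonalIdempotents e) (hθ : Function.Injective θ)
    (hb : f b = ∑ i, θ i • e i) (x : S) : pinching e (f x) ∈ f.range := by
  obtain ⟨z, hz, _, ⟨y, rfl⟩, rfl⟩ := Submodule.mem_sup.mp
    ((isCompl_ker_ad_range_ad (K := K) hf he hθ hb).sup_eq_top ▸ Submodule.mem_top (x := x))
  rw [LinearMap.mem_ker, LieAlgebra.ad_apply, ← commute_iff_lie_eq] at hz
  refine ⟨z, ?_⟩
  rw [LieAlgebra.ad_apply, map_add, map_add, map_ring_lie, hb,
    pinching_lie_eq_zero he.toOrthogonalIdempotents, add_zero,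
    pinching_eq_self_of_commute he hθ (hb ▸ hz.map f)]

end SpectralDecomposition

theorem pinching_single_apply {ι n R : Type*} [Fintype ι] [Fintype n] [DecidableEq n] [Semiring R]
    (E : ι → Matrix n n R) (a b : n) :
    pinching E (single b b 1) a a = ∑ i, E i a b * E i b a := by
  simp [pinching_apply, Matrix.sum_apply, Matrix.mul_apply, single_apply, ite_and]

theorem map_adjMatrix {V R S : Type*} [NonAssocSemiring R] [NonAssocSemiring S] (f : R →+* S)
    (G : SimpleGraph V) [DecidableRel G.Adj] : (G.adjMatrix R).map f = G.adjMatrix S := by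
  ext i j
  simp [SimpleGraph.adjMatrix_apply, apply_ite f]

theorem average_mixing_matrix_rational_general {ι n K L : Type*} [Fintype ι] [Fintype n]
    [DecidableEq n] [Field K] [CommRing L] [IsDomain L] [Algebra K L] {B : Matrix n n K}
    {θ : ι → L} (hθ : Function.Injective θ) {E : ι → Matrix n n L}
    (hE : CompleteOrthogonalIdempotents E) (hspec : B.map (algebraMap K L) = ∑ r, θ r • E r)
    (a b : n) : ∑ r, E r a b * E r b a ∈ (algebraMap K L).range := by
  have hsingle : (algebraMap K L).mapMatrix (single b b 1) = single b b 1 := by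
    rw [RingHom.mapMatrix_apply, map_single, map_one]
  obtain ⟨C, hC⟩ := pinching_map_mem_range K (f := (algebraMap K L).mapMatrix)
    (map_injective (algebraMap K L).injective) hE hθ hspec (single b b 1)
  refine ⟨C a a, ?_⟩
  rw [← pinching_single_apply E, ← hsingle, ← hC, RingHom.mapMatrix_apply, map_apply]

/-- For the adjacency matrix `A = ∑ r, θ r • E r` of a finite simple
graph, every entry of the average mixing matrix `M̂ = ∑ r, E r ∘ E r` is rational:
`∑ r, ((E r)_{ab})² ∈ ℚ` for all vertices `a`, `b`. -/
theorem average_mixing_matrix_rational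
    {n d : ℕ} (G : SimpleGraph (Fin n)) [DecidableRel G.Adj]
    (A : Matrix (Fin n) (Fin n) ℝ) (hA : A = G.adjMatrix ℝ)
    (θ : Fin (d + 1) → ℝ) (hθ : Function.Injective θ)
    (E : Fin (d + 1) → Matrix (Fin n) (Fin n) ℝ)
    (hspec : A = ∑ r, θ r • E r)
    (hsym : ∀ r, (E r)ᵀ = E r)
    (hidem : ∀ r, E r * E r = E r)
    (horth : ∀ r s, r ≠ s → E r * E s = 0)
    (hsum : ∑ r, E r = 1)
    (hE0 : ∀ r, E r ≠ 0) :
    ∀ a b : Fin n, ∃ q : ℚ, (∑ r, (E r a b) ^ 2) = (q : ℝ) := by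
  intro a b
  have hE : CompleteOrthogonalIdempotents E := ⟨⟨hidem, horth⟩, hsum⟩
  have hB : (G.adjMatrix ℚ).map (algebraMap ℚ ℝ) = ∑ r, θ r • E r := by
    rw [map_adjMatrix, ← hA, hspec]
  obtain ⟨q, hq⟩ := average_mixing_matrix_rational_general hθ hE hB a b
  refine ⟨q, ?_⟩
  simpa only [sq, eq_ratCast, IsSymm.apply (hsym _)] using hq.symm
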